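/- arXiv:2204.13876 — 4 statements merged into one kernel-verified Lean document; each statement's English description precedes it below -/
import Mathlib

section
/- For all natural numbers n and m with 1 ≤ m ≤ n, the total linear island count satisfies 𝓑ⁿₘ = Σ_{A ⊆ {1,…,n}, |A| = m} #{i ∈ A : i+1 ∉ A} = (n − m + 1) · C(n−1, m−1), where C denotes the binomial coefficient. -/
/-- `linB n m` is the total linear island count: the sum, over all `m`-element
subsets `A` of `{1, …, n}`, of the number of islands of `A` on the line, i.e. of
`#{i ∈ A : i + 1 ∉ A}` (addition in `ℕ`). -/
def linB (n m : ℕ) : ℕ :=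
  ∑ A ∈ Finset.powersetCard m (Finset.Icc 1 n),
    (A.filter (fun i => i + 1 ∉ A)).card

/-!
Each island is represented by its right end, so we count the pairs `(A, i)` with `i ∈ A` and
`i + 1 ∉ A` by summing over `i` first. For `i < n` the other `m - 1` elements of `A` are chosen
freely from the `n - 2` points different from `i` and `i + 1`; for `i = n` there are `n - 1` points
to choose from. This gives `(n - 1) * C(n - 2, m - 1) + C(n - 1, m - 1)`, and
`(n - 1) * C(n - 2, m - 1) = (n - m) * C(n - 1, m - 1)`.
-/

section DoubleCounting

open Finset

variable {α : Type*} [DecidableEq α]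

lemma filter_notMem_powersetCard (S : Finset α) (k : ℕ) (b : α) :
    {A ∈ S.powersetCard k | b ∉ A} = (S.erase b).powersetCard k := by
  ext A
  simp only [mem_filter, mem_powersetCard, subset_erase, and_right_comm]

lemma card_filter_mem_notMem_powersetCard {S : Finset α} {a b : α} (ha : a ∈ S) (hab : a ≠ b)
    (k : ℕ) :
    #{A ∈ S.powersetCard (k + 1) | a ∈ A ∧ b ∉ A} = (#(S.erase b) - 1).choose k := by
  have hab' : {a} ⊆ S.erase b := singleton_subset_iff.2 (mem_erase.2 ⟨hab, ha⟩)
  calc #{A ∈ S.powersetCard (k + 1) | a ∈ A ∧ b ∉ A}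
      = #{A ∈ (S.erase b).powersetCard (k + 1) | {a} ⊆ A} := by
        simp only [← filter_notMem_powersetCard, filter_filter, singleton_subset_iff, and_comm]
    _ = (#(S.erase b) - 1).choose k := card_filter_powersetCard_subset {a} _ _ hab' (by simp)

lemma sum_card_filter_eq_sum_card_filter_mem {S : Finset α} {𝒜 : Finset (Finset α)}
    (h𝒜 : ∀ A ∈ 𝒜, A ⊆ S) (p : Finset α → α → Prop) [∀ A, DecidablePred (p A)] :
    ∑ A ∈ 𝒜, #{a ∈ A | p A a} = ∑ a ∈ S, #{A ∈ 𝒜 | a ∈ A ∧ p A a} := by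
  calc ∑ A ∈ 𝒜, #{a ∈ A | p A a}
      = ∑ A ∈ 𝒜, #{a ∈ S | a ∈ A ∧ p A a} := by
        refine sum_congr rfl fun A hA ↦ ?_
        rw [← filter_filter, filter_mem_eq_inter, inter_eq_right.2 (h𝒜 A hA)]
    _ = ∑ a ∈ S, #{A ∈ 𝒜 | a ∈ A ∧ p A a} :=
        sum_card_bipartiteAbove_eq_sum_card_bipartiteBelow fun A a ↦ a ∈ A ∧ p A a

theorem sum_powersetCard_card_filter_apply_notMem (S : Finset α) (f : α → α)
    (hf : ∀ a ∈ S, a ≠ f a) (k : ℕ) :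
    ∑ A ∈ S.powersetCard (k + 1), #{a ∈ A | f a ∉ A} =
      #{a ∈ S | f a ∈ S} * (#S - 2).choose k + #{a ∈ S | f a ∉ S} * (#S - 1).choose k := by
  calc ∑ A ∈ S.powersetCard (k + 1), #{a ∈ A | f a ∉ A}
      = ∑ a ∈ S, #{A ∈ S.powersetCard (k + 1) | a ∈ A ∧ f a ∉ A} :=
        sum_card_filter_eq_sum_card_filter_mem (fun _ hA ↦ (mem_powersetCard.1 hA).1) _
    _ = ∑ a ∈ S, (#(S.erase (f a)) - 1).choose k :=
        sum_congr rfl fun a ha ↦ card_filter_mem_notMem_powersetCard ha (hf a ha) k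
    _ = ∑ a ∈ S, if f a ∈ S then (#S - 2).choose k else (#S - 1).choose k := by
        refine sum_congr rfl fun a _ ↦ ?_
        rw [card_erase_eq_ite]
        split_ifs <;> rfl
    _ = _ := by rw [sum_ite, sum_const, sum_const, smul_eq_mul, smul_eq_mul]

end DoubleCounting

lemma mul_choose_sub_one (n k : ℕ) : n * (n - 1).choose k = (n - k) * n.choose k := by
  cases n with
  | zero => simp
  | succ n =>
    rw [Nat.add_sub_cancel, mul_comm, Nat.choose_mul_succ_eq, mul_comm]

theorem linear_island_count (n m : ℕ) (hm : 1 ≤ m) (hmn : m ≤ n) :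
    linB n m = (n - m + 1) * Nat.choose (n - 1) (m - 1) := by
  obtain ⟨k, rfl⟩ := Nat.exists_eq_add_of_le' hm
  have interior : {i ∈ Finset.Icc 1 n | i + 1 ∈ Finset.Icc 1 n} = Finset.Ico 1 n := by
    grind
  have last : {i ∈ Finset.Icc 1 n | i + 1 ∉ Finset.Icc 1 n} = {n} := by
    grind
  calc linB n (k + 1)
      = (n - 1) * (n - 2).choose k + (n - 1).choose k := by
        rw [linB, sum_powersetCard_card_filter_apply_notMem _ _ (fun i _ ↦ i.succ_ne_self.symm),
          interior, last, Nat.card_Ico, Nat.card_Icc, Finset.card_singleton, Nat.add_sub_cancel,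
          one_mul]
    _ = (n - 1 - k) * (n - 1).choose k + (n - 1).choose k := by
        rw [← mul_choose_sub_one (n - 1) k, Nat.sub_sub]
    _ = (n - (k + 1) + 1) * (n - 1).choose (k + 1 - 1) := by
        rw [Nat.add_sub_cancel, Nat.sub_sub, Nat.add_comm 1 k, Nat.add_one_mul]
end

section
/- For all natural numbers n and m with 1 ≤ m < n, the circular island count is obtained from the linear one by 𝓓ⁿₘ = 𝓑ⁿₘ − C(n−2, m−2), where C denotes the binomial coefficient with the convention C(a, b) = 0 when b > a, and C(n−2, m−2) is interpreted as 0 when m = 1. -/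
/-- `circD n m` is the total circular island count: the sum, over all `m`-element
subsets `A` of `ℤ/nℤ`, of the number of islands of `A` on the circle, i.e. of
`#{i ∈ A : i + 1 ∉ A}` (addition mod `n`). -/
def circD (n m : ℕ) [NeZero n] : ℕ :=
  ∑ A ∈ Finset.powersetCard m (Finset.univ : Finset (ZMod n)),
    (A.filter (fun i => i + 1 ∉ A)).card

/-!
Count pairs `(A, i)` with `i ∈ A` and `i + 1 ∉ A`, grouping them by `i` instead of `A`.
On the circle each of the `n` residues `i` contributes the `C(n - 2, m - 1)` sets that contain
`i` and avoid `i + 1`. On the line the same holds for `i < n`, whereas `i = n` contributes all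
`C(n - 1, m - 1)` sets containing `n`. By Pascal's rule the two totals differ by
`C(n - 1, m - 1) - C(n - 2, m - 1) = C(n - 2, m - 2)`.
-/

open Finset

section PowersetCard

variable {α : Type*} [DecidableEq α]

theorem card_filter_mem_notMem_powersetCard_succ {s : Finset α} {a b : α} (ha : a ∈ s)
    (hab : a ≠ b) (m : ℕ) :
    #{A ∈ s.powersetCard (m + 1) | a ∈ A ∧ b ∉ A} = (#(s.erase b) - 1).choose m := by
  have filter_eq : {A ∈ s.powersetCard (m + 1) | a ∈ A ∧ b ∉ A} =
      {A ∈ (s.erase b).powersetCard (m + 1) | {a} ⊆ A} := by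
    ext A
    simp only [mem_filter, mem_powersetCard, subset_erase, singleton_subset_iff]
    tauto
  have ha' : {a} ⊆ s.erase b := singleton_subset_iff.2 (mem_erase.2 ⟨hab, ha⟩)
  rw [filter_eq, card_filter_powersetCard_subset _ _ _ ha' (by simp), card_singleton,
    Nat.add_sub_cancel]

theorem sum_powersetCard_succ_card_filter_notMem {s : Finset α} {f : α → α}
    (hf : ∀ i ∈ s, i ≠ f i) (m : ℕ) :
    ∑ A ∈ s.powersetCard (m + 1), #{i ∈ A | f i ∉ A} =
      ∑ i ∈ s, (#(s.erase (f i)) - 1).choose m := by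
  calc ∑ A ∈ s.powersetCard (m + 1), #{i ∈ A | f i ∉ A}
    _ = ∑ A ∈ s.powersetCard (m + 1), #{i ∈ s | i ∈ A ∧ f i ∉ A} := by
      refine sum_congr rfl fun A hA ↦ ?_
      rw [← filter_filter, filter_mem_eq_inter, inter_eq_right.2 (mem_powersetCard.1 hA).1]
    _ = ∑ i ∈ s, #{A ∈ s.powersetCard (m + 1) | i ∈ A ∧ f i ∉ A} :=
      sum_card_bipartiteAbove_eq_sum_card_bipartiteBelow fun A i ↦ i ∈ A ∧ f i ∉ A
    _ = ∑ i ∈ s, (#(s.erase (f i)) - 1).choose m :=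
      sum_congr rfl fun i hi ↦ card_filter_mem_notMem_powersetCard_succ hi (hf i hi) m

end PowersetCard

theorem circD_succ {n : ℕ} [NeZero n] (hn : 1 < n) (m : ℕ) :
    circD n (m + 1) = n * (n - 2).choose m := by
  have : Fact (1 < n) := ⟨hn⟩
  have ne_succ : ∀ i ∈ (univ : Finset (ZMod n)), i ≠ i + 1 := by simp
  rw [circD, sum_powersetCard_succ_card_filter_notMem ne_succ]
  simp [ZMod.card, Nat.sub_sub]

theorem linB_succ_succ (n m : ℕ) :
    linB (n + 1) (m + 1) = n * (n - 1).choose m + n.choose m := by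
  have ne_succ : ∀ i ∈ Icc 1 (n + 1), i ≠ i + 1 := by simp
  have card_erase_succ : ∀ i ∈ Icc 1 n, #((Icc 1 (n + 1)).erase (i + 1)) = n := fun i hi ↦ by
    have : i + 1 ∈ Icc 1 (n + 1) := by grind
    simp [card_erase_of_mem this]
  rw [linB, sum_powersetCard_succ_card_filter_notMem ne_succ, sum_Icc_succ_top (by lia)]
  congr 1
  · rw [sum_congr rfl fun i hi ↦ by rw [card_erase_succ i hi]]
    simp
  · simp

theorem circD_eq_linB_sub (n m : ℕ) [NeZero n] (hm : 1 ≤ m) (hmn : m < n) :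
    (circD n m : ℤ) = (linB n m : ℤ)
      - (if m = 1 then 0 else (Nat.choose (n - 2) (m - 2) : ℤ)) := by
  obtain ⟨N, rfl⟩ := Nat.exists_eq_add_of_le' (show 2 ≤ n by lia)
  obtain rfl | two_le_m := hm.eq_or_lt
  · rw [circD_succ (by lia), linB_succ_succ, if_pos rfl]
    push_cast [Nat.choose_zero_right]
    ring
  · obtain ⟨k, rfl⟩ := Nat.exists_eq_add_of_le' two_le_m
    have pascal : (N + 1).choose (k + 1) = N.choose k + N.choose (k + 1) :=
      Nat.choose_succ_succ N k
    rw [circD_succ (by lia), linB_succ_succ, if_neg (by lia), pascal]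
    simp only [Nat.add_sub_cancel]
    push_cast
    ring
end

section
/- Let T be a tree (a connected acyclic simple graph) on a finite vertex set with n ≥ 2 vertices. Then β_T(x) = (n−1)·(1+x)^{n−2} + (1+x)^{n−1} as polynomials with integer coefficients. -/
open Polynomial

/-- `islandF G S` is the quantity `f_G(S) = 2·c_G(S) + e_G(S) − |S|`, where `c_G(S)`
and `e_G(S)` are the numbers of connected components and edges of the induced
subgraph `G[S]`.  For a planar graph it equals the total number of faces of a
planar embedding of `G[S]`, summed over connected components. -/
noncomputable def islandF {V : Type*} [Fintype V] [DecidableEq V]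
    (G : SimpleGraph V) (S : Finset V) : ℤ :=
  2 * Nat.card ((G.induce (S : Set V)).ConnectedComponent)
    + Nat.card ((G.induce (S : Set V)).edgeSet) - S.card

/-- The total island boundary polynomial `β_G(x) = Σ_{∅ ≠ S ⊆ V} f_G(S)·x^{|S|−1}`. -/
noncomputable def islandPoly {V : Type*} [Fintype V] [DecidableEq V]
    (G : SimpleGraph V) : Polynomial ℤ :=
  ∑ S ∈ Finset.univ.powerset.filter (fun S : Finset V => S.Nonempty),
    Polynomial.C (islandF G S) * Polynomial.X ^ (S.card - 1)

/-!
In a forest every vertex set `S` satisfies `c(S) + e(S) = |S|`, since a tree on `k` vertices has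
degree sum `2 * k - 2`. So `f(S) = |S| - e(S)` is a signed count of the vertices and edges contained
in `S`. Exchanging the order of summation, a fixed `k`-element set is counted once for each of its
supersets, whose generating function is `x ^ k * (1 + x) ^ (n - k)`. Hence a forest with `m` edges
has `β(x) = n (1 + x) ^ (n - 1) - m x (1 + x) ^ (n - 2)`, and `n = c + m`, with `c` the number of
components, turns this into `m (1 + x) ^ (n - 2) + c (1 + x) ^ (n - 1)`.
-/

section ForestCount

open Finset

variable {V : Type*} {G : SimpleGraph V}

theorem neighborSet_subset_supp (c : G.ConnectedComponent) {v : V} (hv : v ∈ c.supp) :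
    G.neighborSet v ⊆ c.supp :=
  fun _ hvw ↦ (c.mem_supp_congr_adj hvw).1 hv

open Classical in
theorem sum_degree_supp_add_two_of_isAcyclic [Fintype V] (hG : G.IsAcyclic)
    (c : G.ConnectedComponent) :
    ∑ v : c.supp, G.degree v + 2 = 2 * Fintype.card c.supp := by
  have htree : (G.induce c.supp).IsTree := hG.isTree_connectedComponent c
  have hdeg (v : c.supp) : (G.induce c.supp).degree v = G.degree v :=
    G.degree_induce_of_neighborSet_subset (neighborSet_subset_supp c v.2)
  calc ∑ v : c.supp, G.degree v + 2
      = ∑ v : c.supp, (G.induce c.supp).degree v + 2 := by simp only [hdeg]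
    _ = 2 * #(G.induce c.supp).edgeFinset + 2 := by
      rw [SimpleGraph.sum_degrees_eq_twice_card_edges]
    _ = 2 * Fintype.card c.supp := by rw [← htree.card_edgeFinset, mul_add_one]

theorem card_connectedComponent_add_card_edgeSet_of_isAcyclic [Finite V] (hG : G.IsAcyclic) :
    Nat.card G.ConnectedComponent + Nat.card G.edgeSet = Nat.card V := by
  classical
  have := Fintype.ofFinite V
  have hsum (f : V → ℕ) : ∑ c : G.ConnectedComponent, ∑ v : c.supp, f v = ∑ v, f v := by
    convert Fintype.sum_fiberwise G.connectedComponentMk f <;> rfl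
  have hcard : ∑ c : G.ConnectedComponent, Fintype.card c.supp = Fintype.card V := by
    simpa only [sum_const, card_univ, smul_eq_mul, mul_one] using hsum fun _ ↦ 1
  have htwice : 2 * #G.edgeFinset + 2 * Fintype.card G.ConnectedComponent = 2 * Fintype.card V := by
    calc 2 * #G.edgeFinset + 2 * Fintype.card G.ConnectedComponent
        = ∑ c : G.ConnectedComponent, (∑ v : c.supp, G.degree v + 2) := by
          rw [sum_add_distrib, hsum (G.degree ·), G.sum_degrees_eq_twice_card_edges, sum_const,
            card_univ, smul_eq_mul, mul_comm 2 (Fintype.card _)]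
      _ = 2 * Fintype.card V := by
          simp only [sum_degree_supp_add_two_of_isAcyclic hG, ← mul_sum, hcard]
  rw [Nat.card_eq_fintype_card, Nat.card_eq_fintype_card, Nat.card_eq_fintype_card,
    ← SimpleGraph.edgeFinset_card]
  lia

theorem card_connectedComponent_of_connected (hG : G.Connected) :
    Nat.card G.ConnectedComponent = 1 := by
  have := hG.nonempty
  have := hG.preconnected.subsingleton_connectedComponent
  exact Nat.card_eq_one_iff_unique.2 ⟨inferInstance, inferInstance⟩

end ForestCount

section SubsetCount

open Finset

variable {α ι R : Type*} [CommSemiring R]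

theorem sum_Icc_pow_card_sub [DecidableEq α] {s t : Finset α} (hst : s ⊆ t) (x : R) :
    ∑ u ∈ Icc s t, x ^ (#u - #s) = (1 + x) ^ (#t - #s) := by
  have hdisj {u : Finset α} (hu : u ∈ (t \ s).powerset) : Disjoint s u :=
    disjoint_sdiff.mono_right (mem_powerset.1 hu)
  have hinj : Set.InjOn (s ∪ ·) ((t \ s).powerset : Set (Finset α)) := fun u hu v hv huv ↦ by
    have huv' : (s ∪ u) \ s = (s ∪ v) \ s := congrArg (· \ s) huv
    rwa [union_sdiff_cancel_left (hdisj hu), union_sdiff_cancel_left (hdisj hv)] at huv'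
  calc ∑ u ∈ Icc s t, x ^ (#u - #s)
      = ∑ u ∈ (t \ s).powerset, x ^ (#(s ∪ u) - #s) := by
        rw [Icc_eq_image_powerset hst, sum_image hinj]
    _ = ∑ u ∈ (t \ s).powerset, x ^ #u * 1 ^ (#(t \ s) - #u) :=
        sum_congr rfl fun u hu ↦ by
          rw [card_union_of_disjoint (hdisj hu), Nat.add_sub_cancel_left, one_pow, mul_one]
    _ = (1 + x) ^ (#t - #s) := by
        rw [sum_pow_mul_eq_add_pow, card_sdiff_of_subset hst, add_comm]

/-- Members of the family have `k` elements, so the sets `S` at which `#S - k` is truncated contain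
none of them and have coefficient `0`. -/
theorem sum_card_filter_subset_mul_pow [Fintype α] [DecidableEq α] (I : Finset ι)
    (A : ι → Finset α) {k : ℕ} (hA : ∀ i ∈ I, #(A i) = k) (x : R) :
    ∑ S : Finset α, (#{i ∈ I | A i ⊆ S} : R) * x ^ (#S - k)
      = #I * (1 + x) ^ (Fintype.card α - k) := by
  calc ∑ S : Finset α, (#{i ∈ I | A i ⊆ S} : R) * x ^ (#S - k)
      = ∑ i ∈ I, ∑ S : Finset α with A i ⊆ S, x ^ (#S - k) := by
        simp only [← nsmul_eq_mul, ← sum_const]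
        exact sum_comm' (by simp [and_comm])
    _ = ∑ i ∈ I, (1 + x) ^ (Fintype.card α - k) := sum_congr rfl fun i hi ↦ by
        have hIcc : univ.filter (A i ⊆ ·) = Icc (A i) univ := by
          rw [Icc_eq_filter_powerset, powerset_univ]
        rw [hIcc, ← hA i hi, sum_Icc_pow_card_sub (subset_univ _), card_univ]
    _ = #I * (1 + x) ^ (Fintype.card α - k) := by rw [sum_const, nsmul_eq_mul]

theorem sum_card_mul_pow_card_sub_one [Fintype α] (x : R) :
    ∑ S : Finset α, (#S : R) * x ^ (#S - 1)
      = Fintype.card α * (1 + x) ^ (Fintype.card α - 1) := by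
  classical
  simpa only [singleton_subset_iff, filter_univ_mem, card_univ] using
    sum_card_filter_subset_mul_pow univ (fun a : α ↦ {a}) (fun a _ ↦ card_singleton a) x

end SubsetCount

section Island

open Finset

theorem card_toFinset_of_mem_edgeSet {V : Type*} [DecidableEq V] {G : SimpleGraph V} {e : Sym2 V}
    (he : e ∈ G.edgeSet) : #e.toFinset = 2 :=
  Sym2.card_toFinset_of_not_isDiag e (G.not_isDiag_of_mem_edgeSet he)

variable {V : Type*} [Fintype V] [DecidableEq V]

theorem sum_card_edges_mul_pow_card_sub_one {R : Type*} [CommSemiring R] (G : SimpleGraph V)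
    [DecidableRel G.Adj] (x : R) :
    ∑ S : Finset V, (#{e ∈ G.edgeFinset | e.toFinset ⊆ S} : R) * x ^ (#S - 1)
      = x * (#G.edgeFinset * (1 + x) ^ (Fintype.card V - 2)) := by
  have hedge : ∀ e ∈ G.edgeFinset, #e.toFinset = 2 := fun e he ↦
    card_toFinset_of_mem_edgeSet (SimpleGraph.mem_edgeFinset.1 he)
  rw [← sum_card_filter_subset_mul_pow G.edgeFinset Sym2.toFinset hedge x, mul_sum]
  refine sum_congr rfl fun S _ ↦ ?_
  obtain hnone | ⟨e, he⟩ := (G.edgeFinset.filter (·.toFinset ⊆ S)).eq_empty_or_nonempty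
  · simp [hnone]
  · obtain ⟨heG, heS⟩ := mem_filter.1 he
    have htwo : 2 ≤ #S := hedge e heG ▸ card_le_card heS
    rw [mul_left_comm, ← pow_succ', show #S - 2 + 1 = #S - 1 by lia]

theorem islandF_empty (G : SimpleGraph V) : islandF G ∅ = 0 := by
  simp [islandF]

theorem islandPoly_eq_sum (G : SimpleGraph V) :
    islandPoly G = ∑ S : Finset V, C (islandF G S) * X ^ (#S - 1) := by
  rw [islandPoly, powerset_univ]
  refine sum_filter_of_ne fun S _ hS ↦ nonempty_iff_ne_empty.2 ?_
  rintro rfl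
  simp [islandF_empty] at hS

theorem islandF_of_isAcyclic {F : SimpleGraph V} [DecidableRel F.Adj] (hF : F.IsAcyclic)
    (S : Finset V) :
    islandF F S = #S - #{e ∈ F.edgeFinset | e.toFinset ⊆ S} := by
  have hcount := card_connectedComponent_add_card_edgeSet_of_isAcyclic (hF.induce (S : Set V))
  have hvert : Nat.card (S : Set V) = #S := by simp
  have hedge : Nat.card (F.induce (S : Set V)).edgeSet
      = #{e ∈ F.edgeFinset | e.toFinset ⊆ S} := by
    rw [F.card_filter_edgeFinset_toFinset_subset, SimpleGraph.edgeFinset_card,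
      Nat.card_eq_fintype_card]
  rw [islandF]
  lia

theorem islandPoly_of_isAcyclic {F : SimpleGraph V} [DecidableRel F.Adj] (hF : F.IsAcyclic) :
    islandPoly F = (Fintype.card V : ℤ[X]) * (1 + X) ^ (Fintype.card V - 1)
      - X * ((#F.edgeFinset : ℤ[X]) * (1 + X) ^ (Fintype.card V - 2)) := by
  simp only [islandPoly_eq_sum, islandF_of_isAcyclic hF, map_sub, map_natCast, sub_mul,
    sum_sub_distrib, sum_card_mul_pow_card_sub_one, sum_card_edges_mul_pow_card_sub_one]

theorem islandPoly_tree_general {F : SimpleGraph V} (hF : F.IsAcyclic) :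
    islandPoly F = C (Nat.card F.edgeSet : ℤ) * (1 + X) ^ (Fintype.card V - 2)
      + C (Nat.card F.ConnectedComponent : ℤ) * (1 + X) ^ (Fintype.card V - 1) := by
  classical
  have hcount := card_connectedComponent_add_card_edgeSet_of_isAcyclic hF
  rw [Nat.card_eq_fintype_card (α := V)] at hcount
  have hedge : #F.edgeFinset = Nat.card F.edgeSet := by
    rw [SimpleGraph.edgeFinset_card, Nat.card_eq_fintype_card]
  have hvert : (Nat.card F.ConnectedComponent + Nat.card F.edgeSet : ℤ[X]) = Fintype.card V :=
    mod_cast hcount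
  -- `n - 2` is a truncated subtraction only when there are no edges.
  have hpow : (Nat.card F.edgeSet : ℤ[X]) * (1 + X) ^ (Fintype.card V - 1)
      = (Nat.card F.edgeSet : ℤ[X]) * ((1 + X) * (1 + X) ^ (Fintype.card V - 2)) := by
    obtain hnone | ⟨e, he⟩ := F.edgeSet.eq_empty_or_nonempty
    · simp [hnone]
    · have htwo : 2 ≤ Fintype.card V :=
        card_toFinset_of_mem_edgeSet he ▸ card_le_univ e.toFinset
      rw [← pow_succ', show Fintype.card V - 2 + 1 = Fintype.card V - 1 by lia]
  rw [islandPoly_of_isAcyclic hF, hedge]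
  simp only [map_natCast]
  linear_combination hpow - (1 + X : ℤ[X]) ^ (Fintype.card V - 1) * hvert

end Island

theorem islandPoly_tree {V : Type*} [Fintype V] [DecidableEq V]
    (T : SimpleGraph V) (hT : T.IsTree) (hn : 2 ≤ Fintype.card V) :
    islandPoly T
      = Polynomial.C ((Fintype.card V - 1 : ℕ) : ℤ)
          * (1 + Polynomial.X) ^ (Fintype.card V - 2)
        + (1 + Polynomial.X) ^ (Fintype.card V - 1) := by
  have hcomp : Nat.card T.ConnectedComponent = 1 :=
    card_connectedComponent_of_connected hT.connected
  have hedge : Nat.card T.edgeSet = Fintype.card V - 1 := by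
    simpa using Nat.eq_sub_of_add_eq (SimpleGraph.isTree_iff_connected_and_card.1 hT).2
  rw [islandPoly_tree_general hT.isAcyclic, hedge, hcomp, Nat.cast_one, C_1, one_mul]
end

section
/- Let G be a simple graph on a finite vertex set V with a vertex coloring κ : V → C, and let c, c' ∈ κ(V) be two distinct colors that are both used by κ. Let κ' be the coloring obtained from κ by recoloring every vertex of color c with the color c' (so κ'(v) = c' if κ(v) = c, and κ'(v) = κ(v) otherwise). Then β_{G,κ}(x) = x·β_{G,κ'}(x) + β_{G[V∖κ⁻¹(c)],κ}(x) + β_{G[V∖κ⁻¹(c')],κ}(x) − (1+x)·β_{G[V∖κ⁻¹({c,c'})],κ}(x) as polynomials with integer coefficients, where the colorings on induced subgraphs are the restrictions of κ. -/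
open Polynomial

/-- The colored total island boundary polynomial
`β_{G,κ}(x) = Σ_{∅ ≠ T ⊆ κ(V)} f_G(κ⁻¹(T))·x^{|T|−1}`, the sum ranging over
nonempty subsets `T` of the set of colors used by `κ`. -/
noncomputable def coloredIslandPoly {V : Type*} [Fintype V] [DecidableEq V]
    {γ : Type*} [DecidableEq γ] (G : SimpleGraph V) (κ : V → γ) : Polynomial ℤ :=
  ∑ T ∈ (Finset.univ.image κ).powerset.filter (fun T : Finset γ => T.Nonempty),
    Polynomial.C (islandF G (Finset.univ.filter (fun v => κ v ∈ T)))
      * Polynomial.X ^ (T.card - 1)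

/-!
Weight a finite set `U` of colors by `P U = ∑_{∅ ≠ T ⊆ U} g T · x^(|T| - 1)`, where
`g T = f_G(κ⁻¹(T))`. All five polynomials have this form: deleting a color class only shrinks
`U`, because `f_G` of a vertex set is intrinsic to the subgraph it induces, and merging `c` into
`c'` deletes `c` from `U` and replaces `g T` by `g (T ∪ {c})` whenever `c' ∈ T`.
What remains is a statement about an arbitrary set function `g`. Sort the sets `T` by which of
`c`, `c'` they contain; the sets containing both are the sets containing `c'` in the merged sum,
but one element larger, which is the factor `x`. The sets containing neither appear in all three
sums, so their contribution is counted `x + 1 + 1` times instead of once: hence `-(1 + x)`.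
-/

section SubsetPoly

variable {α R : Type*}

/-- The generating polynomial `∑_{T ⊆ U} g T · x^|T|` of a set function `g` on the subsets
of `U`. -/
noncomputable def subsetPoly [Semiring R] (U : Finset α) (g : Finset α → R) : R[X] :=
  ∑ T ∈ U.powerset, C (g T) * X ^ T.card

/-- The generating polynomial `∑_{∅ ≠ T ⊆ U} g T · x^(|T| - 1)` of a set function `g` on the
nonempty subsets of `U`. With `g T = f_G(κ⁻¹(T))` and `U = κ(V)` it is `β_{G,κ}`. -/
noncomputable def reducedSubsetPoly [Semiring R] (U : Finset α) (g : Finset α → R) : R[X] :=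
  ∑ T ∈ U.powerset with T.Nonempty, C (g T) * X ^ (T.card - 1)

theorem subsetPoly_congr [Semiring R] {U : Finset α} {g h : Finset α → R}
    (hgh : ∀ T ⊆ U, g T = h T) : subsetPoly U g = subsetPoly U h :=
  Finset.sum_congr rfl fun T hT => by rw [hgh T (Finset.mem_powerset.1 hT)]

theorem reducedSubsetPoly_congr [Semiring R] {U : Finset α} {g h : Finset α → R}
    (hgh : ∀ T ⊆ U, g T = h T) : reducedSubsetPoly U g = reducedSubsetPoly U h :=
  Finset.sum_congr rfl fun T hT => by
    rw [hgh T (Finset.mem_powerset.1 (Finset.mem_filter.1 hT).1)]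

variable [DecidableEq α]

theorem subsetPoly_insert [Semiring R] {U : Finset α} {a : α} (ha : a ∉ U) (g : Finset α → R) :
    subsetPoly (insert a U) g = subsetPoly U g + X * subsetPoly U fun T => g (insert a T) := by
  rw [subsetPoly, Finset.sum_powerset_insert ha, subsetPoly, subsetPoly, Finset.mul_sum]
  congr 1
  refine Finset.sum_congr rfl fun T hT => ?_
  have haT : a ∉ T := fun h => ha (Finset.mem_powerset.1 hT h)
  rw [Finset.card_insert_of_notMem haT, X_mul, mul_assoc, pow_succ]

theorem reducedSubsetPoly_insert [Semiring R] {U : Finset α} {a : α} (ha : a ∉ U)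
    (g : Finset α → R) :
    reducedSubsetPoly (insert a U) g =
      reducedSubsetPoly U g + subsetPoly U fun T => g (insert a T) := by
  simp only [reducedSubsetPoly, subsetPoly, Finset.sum_filter]
  rw [Finset.sum_powerset_insert ha]
  congr 1
  refine Finset.sum_congr rfl fun T hT => ?_
  have haT : a ∉ T := fun h => ha (Finset.mem_powerset.1 hT h)
  rw [if_pos (Finset.insert_nonempty a T), Finset.card_insert_of_notMem haT, Nat.add_sub_cancel]

theorem reducedSubsetPoly_insert_insert [Ring R] {D : Finset α} {c c' : α} (hc : c ∉ D)
    (hc' : c' ∉ D) (hne : c ≠ c') (g : Finset α → R) :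
    reducedSubsetPoly (insert c (insert c' D)) g =
      X * reducedSubsetPoly (insert c' D) (fun T => if c' ∈ T then g (insert c T) else g T)
        + reducedSubsetPoly (insert c' D) g + reducedSubsetPoly (insert c D) g
        - (1 + X) * reducedSubsetPoly D g := by
  have hcD : c ∉ insert c' D := by simp [hne, hc]
  have hwithout : reducedSubsetPoly D (fun T => if c' ∈ T then g (insert c T) else g T) =
      reducedSubsetPoly D g :=
    reducedSubsetPoly_congr fun T hT => if_neg fun h => hc' (hT h)
  have hwith : (subsetPoly D fun T =>
        if c' ∈ insert c' T then g (insert c (insert c' T)) else g (insert c' T)) =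
      subsetPoly D fun T => g (insert c (insert c' T)) :=
    subsetPoly_congr fun T _ => if_pos (Finset.mem_insert_self c' T)
  rw [reducedSubsetPoly_insert hcD, subsetPoly_insert hc', reducedSubsetPoly_insert hc,
    reducedSubsetPoly_insert hc' fun T => if c' ∈ T then g (insert c T) else g T,
    hwithout, hwith]
  noncomm_ring

theorem reducedSubsetPoly_eq_erase [Ring R] {U : Finset α} {c c' : α} (hc : c ∈ U) (hc' : c' ∈ U)
    (hne : c ≠ c') (g : Finset α → R) :
    reducedSubsetPoly U g =
      X * reducedSubsetPoly (U.erase c) (fun T => if c' ∈ T then g (insert c T) else g T)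
        + reducedSubsetPoly (U.erase c) g + reducedSubsetPoly (U.erase c') g
        - (1 + X) * reducedSubsetPoly ((U.erase c).erase c') g := by
  have h := reducedSubsetPoly_insert_insert (D := (U.erase c).erase c') (by simp) (by simp) hne g
  rwa [Finset.insert_erase (Finset.mem_erase.2 ⟨hne.symm, hc'⟩), Finset.insert_erase hc,
    Finset.erase_right_comm, Finset.insert_erase (Finset.mem_erase.2 ⟨hne, hc⟩),
    Finset.erase_right_comm] at h

theorem image_ite_eq_erase {U : Finset α} {c c' : α} (hc' : c' ∈ U) (hne : c ≠ c') :
    U.image (fun a => if a = c then c' else a) = U.erase c := by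
  grind

end SubsetPoly

section ColoredGraph

variable {V W γ : Type*} [Fintype V] [DecidableEq V] [Fintype W] [DecidableEq W] [DecidableEq γ]

theorem islandF_map {G : SimpleGraph V} {H : SimpleGraph W} (f : H ↪g G) (S : Finset W) :
    islandF G (S.map f.toEmbedding) = islandF H S := by
  have e := (f.comp (SimpleGraph.Embedding.induce (S : Set W))).isoInduceRange
  have hrange : Set.range (f.comp (SimpleGraph.Embedding.induce (S : Set W))) =
      (S.map f.toEmbedding : Finset V) := by
    ext v
    simp
  rw [hrange] at e
  rw [islandF, islandF, Nat.card_congr e.connectedComponentEquiv, Nat.card_congr e.mapEdgeSet,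
    Finset.card_map]

/-- The value `f_G(κ⁻¹(T))`, the coefficient with which the color set `T` enters `β_{G,κ}`. -/
noncomputable def coloredIslandF (G : SimpleGraph V) (κ : V → γ) (T : Finset γ) : ℤ :=
  islandF G (Finset.univ.filter fun v => κ v ∈ T)

theorem coloredIslandPoly_eq_reducedSubsetPoly (G : SimpleGraph V) (κ : V → γ) :
    coloredIslandPoly G κ = reducedSubsetPoly (Finset.univ.image κ) (coloredIslandF G κ) :=
  rfl

theorem coloredIslandF_comp_embedding {G : SimpleGraph V} {H : SimpleGraph W} (f : H ↪g G)
    (κ : V → γ) {T : Finset γ} (hT : ∀ v, κ v ∈ T → v ∈ Set.range f) :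
    coloredIslandF H (κ ∘ f) T = coloredIslandF G κ T := by
  rw [coloredIslandF, ← islandF_map f, coloredIslandF]
  congr 1
  ext v
  simp only [Finset.mem_map, Finset.mem_filter, Finset.mem_univ, true_and, Function.comp_apply]
  constructor
  · rintro ⟨w, hw, rfl⟩
    exact hw
  · intro hv
    obtain ⟨w, rfl⟩ := hT v hv
    exact ⟨w, hv, rfl⟩

theorem coloredIslandPoly_induce (G : SimpleGraph V) (κ : V → γ) {s : Set V} [Fintype s]
    [DecidableEq s] {U : Finset γ} (hU : U ⊆ Finset.univ.image κ) (hs : ∀ v, v ∈ s ↔ κ v ∈ U) :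
    coloredIslandPoly (G.induce s) (fun v => κ v.1) = reducedSubsetPoly U (coloredIslandF G κ) := by
  have himage : (Finset.univ.image fun v : s => κ v.1) = U := by
    ext a
    simp only [Finset.mem_image, Finset.mem_univ, true_and, Subtype.exists]
    constructor
    · rintro ⟨v, hv, rfl⟩
      exact (hs v).1 hv
    · intro ha
      obtain ⟨v, -, rfl⟩ := Finset.mem_image.1 (hU ha)
      exact ⟨v, (hs v).2 ha, rfl⟩
  rw [coloredIslandPoly_eq_reducedSubsetPoly, himage]
  exact reducedSubsetPoly_congr fun T hT =>
    coloredIslandF_comp_embedding (SimpleGraph.Embedding.induce s) κ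
      fun v hv => ⟨⟨v, (hs v).2 (hT hv)⟩, rfl⟩

theorem coloredIslandF_recolor (G : SimpleGraph V) (κ : V → γ) {c : γ} (c' : γ) {T : Finset γ}
    (hc : c ∉ T) :
    coloredIslandF G (fun v => if κ v = c then c' else κ v) T =
      if c' ∈ T then coloredIslandF G κ (insert c T) else coloredIslandF G κ T := by
  unfold coloredIslandF
  split_ifs with hc' <;> congr 1 <;> ext v <;> by_cases hv : κ v = c <;> simp [hv, hc, hc']

theorem coloredIslandPoly_recolor_eq_reducedSubsetPoly (G : SimpleGraph V) (κ : V → γ) {c c' : γ}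
    (hc' : c' ∈ Finset.univ.image κ) (hne : c ≠ c') :
    coloredIslandPoly G (fun v => if κ v = c then c' else κ v) =
      reducedSubsetPoly ((Finset.univ.image κ).erase c) fun T =>
        if c' ∈ T then coloredIslandF G κ (insert c T) else coloredIslandF G κ T := by
  have himage : (Finset.univ.image fun v => if κ v = c then c' else κ v) =
      (Finset.univ.image κ).erase c := by
    rw [← image_ite_eq_erase hc' hne, Finset.image_image, Function.comp_def]
  rw [coloredIslandPoly_eq_reducedSubsetPoly, himage]
  exact reducedSubsetPoly_congr fun T hT =>
    coloredIslandF_recolor G κ c' fun h => Finset.notMem_erase c _ (hT h)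

end ColoredGraph

theorem coloredIslandPoly_recolor {V : Type*} [Fintype V] [DecidableEq V]
    {γ : Type*} [DecidableEq γ] (G : SimpleGraph V) (κ : V → γ)
    (c c' : γ) (hc : c ∈ Finset.univ.image κ) (hc' : c' ∈ Finset.univ.image κ)
    (hne : c ≠ c') :
    coloredIslandPoly G κ
      = Polynomial.X * coloredIslandPoly G (fun v => if κ v = c then c' else κ v)
        + coloredIslandPoly
            (G.induce ((Finset.univ.filter (fun v => κ v ≠ c) : Finset V) : Set V))
            (fun v => κ v.1)
        + coloredIslandPoly
            (G.induce ((Finset.univ.filter (fun v => κ v ≠ c') : Finset V) : Set V))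
            (fun v => κ v.1)
        - (1 + Polynomial.X) * coloredIslandPoly
            (G.induce ((Finset.univ.filter (fun v => κ v ≠ c ∧ κ v ≠ c') : Finset V) : Set V))
            (fun v => κ v.1) := by
  rw [coloredIslandPoly_recolor_eq_reducedSubsetPoly G κ hc' hne,
    coloredIslandPoly_induce G κ (Finset.erase_subset c _) (by simp),
    coloredIslandPoly_induce G κ (Finset.erase_subset c' _) (by simp),
    coloredIslandPoly_induce G κ (U := ((Finset.univ.image κ).erase c).erase c')
      ((Finset.erase_subset _ _).trans (Finset.erase_subset _ _)) (by simp [and_comm])]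
  exact reducedSubsetPoly_eq_erase hc hc' hne (coloredIslandF G κ)
end
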